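/- arXiv:1712.08942 — 2 statements merged into one kernel-verified Lean document; each statement's English description precedes it below -/
import Mathlib

section
/- Let m ≥ 1 and let C : ℤ^m → [0,∞) satisfy: (i) C is even and C(x) = 0 iff x = 0; (ii) C(x) ≤ C(y) whenever x ⪯ y; (iii') there exists a monotone norm ∥·∥⋆ on ℝ^m such that C(x)/∥x∥⋆ ≤ C(x')/∥x'∥⋆ for all nonzero x', x ∈ ℤ^m with x' ⪯ x; and C(x) = C(x̄) for every x ∈ ℤ^m. Fix positive integers N_1, …, N_m with N := N_1 + … + N_m. Let (A,B) be a good pair in {0,1}^N × {0,1}^N, set c_{A,B} := C(β(A−B)), and let t > 0. If t·(A−B)/c_{A,B} ∈ conv{q_D : D ∈ Ā \ {0}}, then t ≤ 1. Consequently q_{A,B} := (A−B)/c_{A,B} lies on the boundary of conv{q_D : D ∈ Ā \ {0}}. -/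
/-- `f` is a norm on the real vector space `E`. -/
def IsNorm {E : Type*} [AddCommGroup E] [Module ℝ E] (f : E → ℝ) : Prop :=
  (∀ x, 0 ≤ f x) ∧ (∀ x, f x = 0 ↔ x = 0) ∧
    (∀ x y, f (x + y) ≤ f x + f y) ∧ ∀ (c : ℝ) (x : E), f (c • x) = |c| * f x

/-- The partial order `x ⪯ y` on real vectors. -/
def PreOrd {ι : Type*} (x y : ι → ℝ) : Prop :=
  ∀ j, |x j| ≤ |y j| ∧ 0 ≤ x j * y j

/-- The partial order `x ⪯ y` on integer vectors. -/
def PreOrdInt {ι : Type*} (x y : ι → ℤ) : Prop :=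
  ∀ j, |x j| ≤ |y j| ∧ 0 ≤ x j * y j

/-- `D ∈ Ā`, i.e. all coordinates of `D ∈ ℤ^N` lie in `{-1, 0, 1}`. -/
def inAbar {m : ℕ} {N : Fin m → ℕ} (D : (Σ i : Fin m, Fin (N i)) → ℤ) : Prop :=
  ∀ j, D j = -1 ∨ D j = 0 ∨ D j = 1

/-- `β(v) ∈ ℤ^m`: the vector of block sums of `v ∈ ℤ^N`. -/
def blockSum {m : ℕ} (N : Fin m → ℕ) (v : (Σ i : Fin m, Fin (N i)) → ℤ) :
    Fin m → ℤ :=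
  fun i => ∑ k : Fin (N i), v ⟨i, k⟩

/-- `β(D̄) ∈ ℤ^m`: the vector of block sums of the coordinatewise absolute value of
`D`. -/
def blockAbsSum {m : ℕ} (N : Fin m → ℕ) (D : (Σ i : Fin m, Fin (N i)) → ℤ) :
    Fin m → ℤ :=
  fun i => ∑ k : Fin (N i), |D ⟨i, k⟩|

/-- `c_D := C(β(D̄))`. -/
def cD {m : ℕ} (N : Fin m → ℕ) (C : (Fin m → ℤ) → ℝ)
    (D : (Σ i : Fin m, Fin (N i)) → ℤ) : ℝ :=
  C (blockAbsSum N D)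

/-- `q_D := D / c_D ∈ ℝ^N`. -/
noncomputable def qD {m : ℕ} (N : Fin m → ℕ) (C : (Fin m → ℤ) → ℝ)
    (D : (Σ i : Fin m, Fin (N i)) → ℤ) : (Σ i : Fin m, Fin (N i)) → ℝ :=
  fun j => (D j : ℝ) / cD N C D

/-- `K := conv {q_D : D ∈ Ā \ {0}} ⊆ ℝ^N`. -/
noncomputable def Kconv {m : ℕ} (N : Fin m → ℕ) (C : (Fin m → ℤ) → ℝ) :
    Set ((Σ i : Fin m, Fin (N i)) → ℝ) :=
  convexHull ℝ {v | ∃ D, inAbar D ∧ D ≠ 0 ∧ v = qD N C D}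

/-- `(A, B)` is a good pair: `A, B ∈ {0,1}^N`, `A - B ≠ 0`, and for every block, if
`A` has a nonzero coordinate in the block then `B` vanishes on the whole block, and
vice versa. -/
def GoodPair {m : ℕ} {N : Fin m → ℕ} (A B : (Σ i : Fin m, Fin (N i)) → ℤ) : Prop :=
  (∀ j, A j = 0 ∨ A j = 1) ∧ (∀ j, B j = 0 ∨ B j = 1) ∧ A - B ≠ 0 ∧
    ∀ i : Fin m,
      ((∃ k : Fin (N i), A ⟨i, k⟩ = 1) → ∀ k : Fin (N i), B ⟨i, k⟩ = 0) ∧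
      ((∃ k : Fin (N i), B ⟨i, k⟩ = 1) → ∀ k : Fin (N i), A ⟨i, k⟩ = 0)

/-!
Fix `E ∈ Ā` and put `p(v) = ‖β((v·E)⁺)‖⋆`, the product and positive part being taken
coordinatewise. Since `‖·‖⋆` is monotone, `p` is sublinear. For `D ∈ Ā` the integer vector
`g = β((D·E)⁺)` is dominated by both `β(D̄)` and `β(Ē)`, so (ii) and (iii') give
`p(q_D) = ‖g‖⋆ / C(β(D̄)) ≤ ‖g‖⋆ / C(g) ≤ ‖β(Ē)‖⋆ / C(β(Ē)) = p(q_E)`.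
Hence `p ≤ p(q_E)` on the convex hull of the `q_D`, which therefore meets the open ray
`{t q_E : t > 1}` nowhere. A good pair contributes the case `E = A - B`, where
`β(Ē)` is the coordinatewise absolute value of `β(A - B)`.
-/

theorem mem_frontier_of_forall_smul_mem_le_one {E : Type*} [TopologicalSpace E]
    [MulAction ℝ E] [ContinuousSMul ℝ E] {s : Set E} {x : E} (hx : x ∈ s)
    (hray : ∀ t : ℝ, 0 < t → t • x ∈ s → t ≤ 1) : x ∈ frontier s := by
  rw [mem_frontier_iff_notMem_interior hx]
  intro hint
  have hcont : ContinuousAt (fun t : ℝ => t • x) 1 := by fun_prop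
  have hnear : ∀ᶠ t in nhds (1 : ℝ), t • x ∈ s :=
    hcont.eventually_mem (by simpa only [one_smul] using mem_interior_iff_mem_nhds.1 hint)
  obtain ⟨t, ht, hts⟩ := ((frequently_gt_nhds (1 : ℝ)).and_eventually hnear).exists
  exact (hray t (zero_lt_one.trans ht) hts).not_gt ht

theorem le_one_of_smul_mem_convexHull {𝕜 E : Type*} [Field 𝕜] [LinearOrder 𝕜]
    [IsStrictOrderedRing 𝕜] [AddCommGroup E] [Module 𝕜 E] {f : E → 𝕜} {S : Set E} {x : E} {t : 𝕜}
    (hf : ConvexOn 𝕜 Set.univ f) (hfx : 0 < f x) (hS : ∀ y ∈ S, f y ≤ f x)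
    (hsmul : f (t • x) = t * f x) (hmem : t • x ∈ convexHull 𝕜 S) : t ≤ 1 := by
  have hhull : convexHull 𝕜 S ⊆ {y ∈ Set.univ | f y ≤ f x} :=
    convexHull_min (fun y hy => ⟨trivial, hS y hy⟩) (hf.convex_le (f x))
  have hle : t * f x ≤ f x := hsmul ▸ (hhull hmem).2
  exact (mul_le_iff_le_one_left hfx).1 hle

theorem abs_sum_eq_sum_abs_of_nonneg_or_nonpos {κ R : Type*} [AddCommGroup R] [LinearOrder R]
    [IsOrderedAddMonoid R] {s : Finset κ} {f : κ → R}
    (hf : (∀ k ∈ s, 0 ≤ f k) ∨ ∀ k ∈ s, f k ≤ 0) : |∑ k ∈ s, f k| = ∑ k ∈ s, |f k| := by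
  rcases hf with hf | hf
  · rw [Finset.abs_sum_of_nonneg hf]
    exact Finset.sum_congr rfl fun k hk => (abs_of_nonneg (hf k hk)).symm
  · rw [abs_of_nonpos (Finset.sum_nonpos hf), ← Finset.sum_neg_distrib]
    exact Finset.sum_congr rfl fun k hk => (abs_of_nonpos (hf k hk)).symm

section Dominance

variable {ι : Type*}

theorem PreOrd.of_nonneg_of_le {x y : ι → ℝ} (hx : 0 ≤ x) (hxy : x ≤ y) : PreOrd x y :=
  fun j => ⟨abs_le_abs_of_nonneg (hx j) (hxy j), mul_nonneg (hx j) ((hx j).trans (hxy j))⟩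

theorem PreOrdInt.of_nonneg_of_le {x y : ι → ℤ} (hx : 0 ≤ x) (hxy : x ≤ y) : PreOrdInt x y :=
  fun j => ⟨abs_le_abs_of_nonneg (hx j) (hxy j), mul_nonneg (hx j) ((hx j).trans (hxy j))⟩

theorem PreOrdInt.zero_left (x : ι → ℤ) : PreOrdInt 0 x :=
  fun j => by simp

theorem cost_pos {C : (ι → ℤ) → ℝ} (hzero : ∀ x, C x = 0 ↔ x = 0)
    (hmono : ∀ x y, PreOrdInt x y → C x ≤ C y) {x : ι → ℤ} (hx : x ≠ 0) : 0 < C x := by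
  have hnonneg : 0 ≤ C x := (hzero 0).2 rfl ▸ hmono 0 x (.zero_left x)
  exact hnonneg.lt_of_ne' (mt (hzero x).1 hx)

end Dominance

namespace IsNorm

variable {E : Type*} [AddCommGroup E] [Module ℝ E] {f : E → ℝ}

theorem map_zero (hf : IsNorm f) : f 0 = 0 :=
  (hf.2.1 0).2 rfl

theorem pos (hf : IsNorm f) {x : E} (hx : x ≠ 0) : 0 < f x :=
  (hf.1 x).lt_of_ne' (mt (hf.2.1 x).1 hx)

theorem add_le (hf : IsNorm f) (x y : E) : f (x + y) ≤ f x + f y :=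
  hf.2.2.1 x y

theorem map_smul_of_nonneg (hf : IsNorm f) {a : ℝ} (ha : 0 ≤ a) (x : E) : f (a • x) = a * f x := by
  rw [hf.2.2.2, abs_of_nonneg ha]

theorem pos_intCast {ι : Type*} {n : (ι → ℝ) → ℝ} (hn : IsNorm n) {x : ι → ℤ} (hx : x ≠ 0) :
    0 < n (fun i => (x i : ℝ)) :=
  hn.pos fun h => hx (funext fun i => Int.cast_eq_zero.1 (congrFun h i))

end IsNorm

theorem norm_div_cost_le {ι : Type*} {C : (ι → ℤ) → ℝ} {n : (ι → ℝ) → ℝ}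
    (hzero : ∀ x, C x = 0 ↔ x = 0) (hmono : ∀ x y, PreOrdInt x y → C x ≤ C y) (hn : IsNorm n)
    (hratio : ∀ x x' : ι → ℤ, x ≠ 0 → x' ≠ 0 → PreOrdInt x' x →
      C x / n (fun i => (x i : ℝ)) ≤ C x' / n (fun i => (x' i : ℝ)))
    {g a b : ι → ℤ} (hb : b ≠ 0) (hga : PreOrdInt g a) (hgb : PreOrdInt g b) :
    n (fun i => (g i : ℝ)) / C a ≤ n (fun i => (b i : ℝ)) / C b := by
  have hCb : 0 < C b := cost_pos hzero hmono hb
  rcases eq_or_ne g 0 with rfl | hg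
  · have hcast : (fun i => (((0 : ι → ℤ) i : ℤ) : ℝ)) = 0 := funext fun _ => Int.cast_zero
    rw [hcast, hn.map_zero, zero_div]
    exact div_nonneg (hn.1 _) hCb.le
  · have hCg : 0 < C g := cost_pos hzero hmono hg
    calc n (fun i => (g i : ℝ)) / C a
        ≤ n (fun i => (g i : ℝ)) / C g :=
          div_le_div_of_nonneg_left (hn.1 _) hCg (hmono g a hga)
      _ = (C g / n (fun i => (g i : ℝ)))⁻¹ := (inv_div _ _).symm
      _ ≤ (C b / n (fun i => (b i : ℝ)))⁻¹ :=
          inv_anti₀ (div_pos hCb (hn.pos_intCast hb)) (hratio b g hb hg hgb)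
      _ = n (fun i => (b i : ℝ)) / C b := inv_div _ _

section Overlap

variable {ι : Type*} {κ : ι → Type*} [∀ i, Fintype (κ i)]
  {R : Type*} [CommRing R] [LinearOrder R]

/-- The vector of block sums `β((v·w)⁺)` of the positive part of the coordinatewise product of
`v` and `w`. For `v, w ∈ Ā` it counts, block by block, the coordinates at which `v` and `w` are
both nonzero and have the same sign. -/
def overlap (v w : (Σ i, κ i) → R) : ι → R :=
  fun i => ∑ k, (v ⟨i, k⟩ * w ⟨i, k⟩)⁺

theorem overlap_comm (v w : (Σ i, κ i) → R) : overlap v w = overlap w v := by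
  ext i
  simp only [overlap, mul_comm]

variable [IsStrictOrderedRing R]

theorem overlap_nonneg (v w : (Σ i, κ i) → R) : 0 ≤ overlap v w :=
  fun _ => Finset.sum_nonneg fun _ _ => posPart_nonneg _

theorem overlap_add_le (u v w : (Σ i, κ i) → R) :
    overlap (u + v) w ≤ overlap u w + overlap v w := by
  intro i
  simp only [overlap, Pi.add_apply, ← Finset.sum_add_distrib, add_mul]
  refine Finset.sum_le_sum fun k _ => sup_le ?_ ?_
  · exact add_le_add (le_posPart _) (le_posPart _)
  · exact add_nonneg (posPart_nonneg _) (posPart_nonneg _)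

theorem overlap_smul {a : R} (ha : 0 ≤ a) (v w : (Σ i, κ i) → R) :
    overlap (a • v) w = a • overlap v w := by
  ext i
  simp only [overlap, Pi.smul_apply, smul_eq_mul, Finset.mul_sum, posPart_def, mul_assoc,
    mul_max_of_nonneg _ _ ha, mul_zero]

theorem overlap_intCast (v w : (Σ i, κ i) → ℤ) :
    overlap (fun j => (v j : R)) (fun j => (w j : R)) = fun i => ((overlap v w i : ℤ) : R) := by
  ext i
  simp only [overlap, posPart_def, Int.cast_sum, Int.cast_max, Int.cast_mul, Int.cast_zero]

theorem convexOn_norm_overlap {n : (ι → ℝ) → ℝ} (hn : IsNorm n)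
    (hnmono : ∀ x y, PreOrd x y → n x ≤ n y) (w : (Σ i, κ i) → ℝ) :
    ConvexOn ℝ Set.univ fun v => n (overlap v w) := by
  refine ⟨convex_univ, fun u _ v _ a b ha hb _ => ?_⟩
  calc n (overlap (a • u + b • v) w)
      ≤ n (overlap (a • u) w + overlap (b • v) w) :=
        hnmono _ _ (.of_nonneg_of_le (overlap_nonneg _ _) (overlap_add_le _ _ _))
    _ ≤ n (overlap (a • u) w) + n (overlap (b • v) w) := hn.add_le _ _
    _ = a • n (overlap u w) + b • n (overlap v w) := by
        simp only [overlap_smul ha, overlap_smul hb, hn.map_smul_of_nonneg ha,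
          hn.map_smul_of_nonneg hb, smul_eq_mul]

end Overlap

section BlockSums

variable {m : ℕ} {N : Fin m → ℕ} {C : (Fin m → ℤ) → ℝ} {D E : (Σ i : Fin m, Fin (N i)) → ℤ}

theorem inAbar.abs_le_one (hD : inAbar D) (j : Σ i : Fin m, Fin (N i)) : |D j| ≤ 1 := by
  rcases hD j with h | h | h <;> simp [h]

theorem blockAbsSum_ne_zero (hD : D ≠ 0) : blockAbsSum N D ≠ 0 := by
  contrapose! hD
  ext ⟨i, k⟩
  have hblock : ∑ k : Fin (N i), |D ⟨i, k⟩| = 0 := congrFun hD i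
  rw [Finset.sum_eq_zero_iff_of_nonneg fun _ _ => abs_nonneg _] at hblock
  exact abs_eq_zero.1 (hblock k (Finset.mem_univ k))

theorem overlap_le_blockAbsSum (hE : inAbar E) : overlap D E ≤ blockAbsSum N D := by
  refine fun i => Finset.sum_le_sum fun k _ => sup_le ?_ (abs_nonneg _)
  calc D ⟨i, k⟩ * E ⟨i, k⟩ ≤ |D ⟨i, k⟩| * |E ⟨i, k⟩| := (le_abs_self _).trans_eq (abs_mul _ _)
    _ ≤ |D ⟨i, k⟩| := mul_le_of_le_one_right (abs_nonneg _) (hE.abs_le_one _)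

theorem overlap_self (hD : inAbar D) : overlap D D = blockAbsSum N D := by
  ext i
  refine Finset.sum_congr rfl fun k _ => ?_
  rcases hD ⟨i, k⟩ with h | h | h <;> simp [h]

theorem norm_overlap_qD {n : (Fin m → ℝ) → ℝ} (hn : IsNorm n) (hC : 0 ≤ cD N C D) :
    n (overlap (qD N C D) fun j => (E j : ℝ)) =
      n (fun i => ((overlap D E i : ℤ) : ℝ)) / C (blockAbsSum N D) := by
  have hqD : qD N C D = (cD N C D)⁻¹ • fun j => (D j : ℝ) :=
    funext fun j => div_eq_inv_mul _ _
  rw [hqD, overlap_smul (inv_nonneg.2 hC), hn.map_smul_of_nonneg (inv_nonneg.2 hC),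
    overlap_intCast, ← div_eq_inv_mul, cD]

theorem norm_overlap_qD_le {n : (Fin m → ℝ) → ℝ} (hzero : ∀ x, C x = 0 ↔ x = 0)
    (hmono : ∀ x y, PreOrdInt x y → C x ≤ C y) (hn : IsNorm n)
    (hratio : ∀ x x' : Fin m → ℤ, x ≠ 0 → x' ≠ 0 → PreOrdInt x' x →
      C x / n (fun i => (x i : ℝ)) ≤ C x' / n (fun i => (x' i : ℝ)))
    (hD : inAbar D) (hD0 : D ≠ 0) (hE : inAbar E) (hE0 : E ≠ 0) :
    n (overlap (qD N C D) fun j => (E j : ℝ)) ≤ n (overlap (qD N C E) fun j => (E j : ℝ)) := by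
  have hcD : 0 < cD N C D := cost_pos hzero hmono (blockAbsSum_ne_zero hD0)
  have hcE : 0 < cD N C E := cost_pos hzero hmono (blockAbsSum_ne_zero hE0)
  have hleD : PreOrdInt (overlap D E) (blockAbsSum N D) :=
    .of_nonneg_of_le (overlap_nonneg _ _) (overlap_le_blockAbsSum hE)
  have hleE : PreOrdInt (overlap D E) (blockAbsSum N E) :=
    .of_nonneg_of_le (overlap_nonneg _ _) (overlap_comm D E ▸ overlap_le_blockAbsSum hD)
  rw [norm_overlap_qD hn hcD.le, norm_overlap_qD hn hcE.le, overlap_self hE]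
  exact norm_div_cost_le hzero hmono hn hratio (blockAbsSum_ne_zero hE0) hleD hleE

theorem norm_overlap_qD_self_pos {n : (Fin m → ℝ) → ℝ} (hzero : ∀ x, C x = 0 ↔ x = 0)
    (hmono : ∀ x y, PreOrdInt x y → C x ≤ C y) (hn : IsNorm n) (hE : inAbar E) (hE0 : E ≠ 0) :
    0 < n (overlap (qD N C E) fun j => (E j : ℝ)) := by
  have hb : blockAbsSum N E ≠ 0 := blockAbsSum_ne_zero hE0
  have hcE : 0 < cD N C E := cost_pos hzero hmono hb
  rw [norm_overlap_qD hn hcE.le, overlap_self hE]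
  exact div_pos (hn.pos_intCast hb) hcE

end BlockSums

namespace GoodPair

variable {m : ℕ} {N : Fin m → ℕ} {A B : (Σ i : Fin m, Fin (N i)) → ℤ}

theorem inAbar_sub (h : GoodPair A B) : inAbar (A - B) := by
  intro j
  have hA := h.1 j
  have hB := h.2.1 j
  simp only [Pi.sub_apply]
  omega

theorem sub_nonneg_or_nonpos (h : GoodPair A B) (i : Fin m) :
    (∀ k : Fin (N i), 0 ≤ (A - B) ⟨i, k⟩) ∨ ∀ k : Fin (N i), (A - B) ⟨i, k⟩ ≤ 0 := by
  obtain ⟨hA, hB, -, hblocks⟩ := h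
  simp only [Pi.sub_apply, sub_nonneg, sub_nonpos]
  by_cases hAi : ∃ k : Fin (N i), A ⟨i, k⟩ = 1
  · left
    intro k
    have hBk := (hblocks i).1 hAi k
    have hAk := hA ⟨i, k⟩
    omega
  · right
    intro k
    have hAk := (hA ⟨i, k⟩).resolve_right fun hk => hAi ⟨k, hk⟩
    have hBk := hB ⟨i, k⟩
    omega

theorem abs_blockSum_sub (h : GoodPair A B) :
    (fun i => |blockSum N (A - B) i|) = blockAbsSum N (A - B) :=
  funext fun i => abs_sum_eq_sum_abs_of_nonneg_or_nonpos <|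
    (h.sub_nonneg_or_nonpos i).imp (fun hi k _ => hi k) fun hi k _ => hi k

theorem div_cost_blockSum_sub_eq_qD {C : (Fin m → ℤ) → ℝ} (habs : ∀ x, C x = C fun i => |x i|)
    (h : GoodPair A B) :
    (fun j => (((A - B) j : ℤ) : ℝ) / C (blockSum N (A - B))) = qD N C (A - B) := by
  rw [habs, h.abs_blockSum_sub]
  rfl

end GoodPair

theorem good_pair_on_boundary_general {m : ℕ} (C : (Fin m → ℤ) → ℝ)
    (hzero : ∀ x, C x = 0 ↔ x = 0)
    (hmono : ∀ x y, PreOrdInt x y → C x ≤ C y)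
    (hsublin : ∃ nrmStar : (Fin m → ℝ) → ℝ, IsNorm nrmStar ∧
      (∀ x y : Fin m → ℝ, PreOrd x y → nrmStar x ≤ nrmStar y) ∧
      ∀ x x' : Fin m → ℤ, x ≠ 0 → x' ≠ 0 → PreOrdInt x' x →
        C x / nrmStar (fun i => (x i : ℝ)) ≤ C x' / nrmStar (fun i => (x' i : ℝ)))
    (N : Fin m → ℕ) (E : (Σ i : Fin m, Fin (N i)) → ℤ) (hE : inAbar E) (hE0 : E ≠ 0) :
    (∀ t : ℝ, 0 < t → t • qD N C E ∈ Kconv N C → t ≤ 1) ∧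
      qD N C E ∈ frontier (Kconv N C) := by
  obtain ⟨n, hn, hnmono, hratio⟩ := hsublin
  have hray : ∀ t : ℝ, 0 < t → t • qD N C E ∈ Kconv N C → t ≤ 1 := by
    refine fun t ht => le_one_of_smul_mem_convexHull
      (convexOn_norm_overlap hn hnmono fun j => (E j : ℝ))
      (norm_overlap_qD_self_pos hzero hmono hn hE hE0) ?_ ?_
    · rintro _ ⟨D, hD, hD0, rfl⟩
      exact norm_overlap_qD_le hzero hmono hn hratio hD hD0 hE hE0
    · rw [overlap_smul ht.le, hn.map_smul_of_nonneg ht.le]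
  have hmem : qD N C E ∈ Kconv N C := subset_convexHull ℝ _ ⟨E, hE, hE0, rfl⟩
  exact ⟨hray, mem_frontier_of_forall_smul_mem_le_one hmem hray⟩

/-- Let `C : ℤ^m → [0,∞)` satisfy (i), (ii), (iii') and
`C(x) = C(x̄)`. If `(A, B)` is a good pair, `c_{A,B} := C(β(A-B))`, and `t > 0` is
such that `t·(A-B)/c_{A,B}` belongs to `conv {q_D : D ∈ Ā \ {0}}`, then `t ≤ 1`.
Consequently `q_{A,B} := (A-B)/c_{A,B}` lies on the boundary of
`conv {q_D : D ∈ Ā \ {0}}`. -/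
theorem good_pair_on_boundary {m : ℕ} (hm : 1 ≤ m)
    (C : (Fin m → ℤ) → ℝ)
    (hC0 : ∀ x, 0 ≤ C x)
    (heven : ∀ x, C (-x) = C x)
    (hzero : ∀ x, C x = 0 ↔ x = 0)
    (hmono : ∀ x y, PreOrdInt x y → C x ≤ C y)
    (hsublin : ∃ nrmStar : (Fin m → ℝ) → ℝ, IsNorm nrmStar ∧
      (∀ x y : Fin m → ℝ, PreOrd x y → nrmStar x ≤ nrmStar y) ∧
      ∀ x x' : Fin m → ℤ, x ≠ 0 → x' ≠ 0 → PreOrdInt x' x →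
        C x / nrmStar (fun i => (x i : ℝ)) ≤ C x' / nrmStar (fun i => (x' i : ℝ)))
    (hsuper : ∀ x, C x = C fun i => |x i|)
    (N : Fin m → ℕ) (hN : ∀ i, 0 < N i)
    (A B : (Σ i : Fin m, Fin (N i)) → ℤ) (hgood : GoodPair A B) :
    (∀ t : ℝ, 0 < t →
      t • (fun j => (((A - B) j : ℤ) : ℝ) / C (blockSum N (A - B))) ∈ Kconv N C →
      t ≤ 1) ∧
    (fun j => (((A - B) j : ℤ) : ℝ) / C (blockSum N (A - B))) ∈
      frontier (Kconv N C) := by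
  rw [hgood.div_cost_blockSum_sub_eq_qD hsuper]
  exact good_pair_on_boundary_general C hzero hmono hsublin N _ hgood.inAbar_sub hgood.2.2.1
end

section
/- Let ∥·∥ be the norm on ℝ² whose unit ball is the hexagon conv{(1,0), (0,1), (1,1), (−1,0), (0,−1), (−1,−1)}. Define the bilinear form L(τ, g) := (τ_1/2 + (√3/2)τ_2)·g_1 + (τ_1/2 − (√3/2)τ_2)·g_2 for τ, g ∈ ℝ². Then: (a) for every τ ∈ ℝ² with Euclidean norm |τ| = 1 and every g ∈ ℝ² with ∥g∥ ≤ 1, one has |L(τ, g)| ≤ 1; and (b) L((1/2, √3/2), (1,0)) = L((1/2, −√3/2), (0,1)) = L((1,0), (1,1)) = 1. -/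
/-!
We have `L(τ, g) = ⟪τ, g₁ w₁ + g₂ w₂⟫` for the unit vectors `w₁ = (1/2, √3/2)`, `w₂ = (1/2, -√3/2)`,
which meet at an angle of 120°, so that `w₁ + w₂` is a unit vector too. Hence `g ↦ g₁ w₁ + g₂ w₂`
maps the vertices of the hexagon to the unit circle and, by convexity, the hexagon into the unit
disc. The comass bound is then Cauchy–Schwarz, with equality when `g` is a vertex and `τ` its image.
-/

section HexagonBound

variable {V E : Type*} [AddCommGroup V] [Module ℝ V] [SeminormedAddCommGroup E] [NormedSpace ℝ E]

lemma norm_map_le_of_mem_convexHull {f : V →ₗ[ℝ] E} {s : Set V} {r : ℝ}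
    (hs : ∀ x ∈ s, ‖f x‖ ≤ r) {x : V} (hx : x ∈ convexHull ℝ s) : ‖f x‖ ≤ r := by
  have hs_ball : s ⊆ f ⁻¹' Metric.closedBall 0 r := fun y hy =>
    mem_closedBall_zero_iff.mpr (hs y hy)
  have hx_ball := convexHull_min hs_ball ((convex_closedBall 0 r).linear_preimage f) hx
  exact mem_closedBall_zero_iff.mp hx_ball

/-- The vertices of the hexagon that is the unit ball of the norm in the mailing problem with
Steiner cost. -/
def hexagonVertices : Set (ℝ × ℝ) :=
  {(1, 0), (0, 1), (1, 1), (-1, 0), (0, -1), (-1, -1)}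

/-- The map `g ↦ g₁ u + g₂ v`, the transpose of the matrix with rows `u` and `v`: it sends a
multiplicity `g` to the `g`-component of the constant `ℝ²`-valued 1-form given by that matrix. -/
def rowCombination (u v : E) : ℝ × ℝ →ₗ[ℝ] E :=
  (LinearMap.toSpanSingleton ℝ E u).coprod (LinearMap.toSpanSingleton ℝ E v)

lemma rowCombination_apply (u v : E) (g : ℝ × ℝ) : rowCombination u v g = g.1 • u + g.2 • v :=
  rfl

lemma norm_rowCombination_le_of_mem_hexagon {u v : E} {r : ℝ} (hu : ‖u‖ ≤ r) (hv : ‖v‖ ≤ r)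
    (huv : ‖u + v‖ ≤ r) {g : ℝ × ℝ} (hg : g ∈ convexHull ℝ hexagonVertices) :
    ‖rowCombination u v g‖ ≤ r := by
  have huv_neg : ‖-u + -v‖ ≤ r := by rwa [← neg_add, norm_neg]
  refine norm_map_le_of_mem_convexHull ?_ hg
  rintro g (rfl | rfl | rfl | rfl | rfl | rfl) <;> simpa [rowCombination_apply]

end HexagonBound

section SteinerCovector

lemma norm_toLp_eq_one_of_sq_add_sq_eq_one {x y : ℝ} (h : x ^ 2 + y ^ 2 = 1) : ‖!₂[x, y]‖ = 1 := by
  simp [EuclideanSpace.norm_eq, h]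

/-- The first row of the matrix of the calibrating form: the direction of the segment with
multiplicity `(1, 0)` in the Y-shaped minimizer. -/
noncomputable def steinerRow₁ : EuclideanSpace ℝ (Fin 2) :=
  !₂[1 / 2, Real.sqrt 3 / 2]

/-- The second row of the matrix of the calibrating form: the direction of the segment with
multiplicity `(0, 1)` in the Y-shaped minimizer. -/
noncomputable def steinerRow₂ : EuclideanSpace ℝ (Fin 2) :=
  !₂[1 / 2, -(Real.sqrt 3 / 2)]

lemma steinerRow₁_add_steinerRow₂ : steinerRow₁ + steinerRow₂ = !₂[1, 0] := by
  ext i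
  fin_cases i <;> norm_num [steinerRow₁, steinerRow₂]

lemma norm_steinerRow₁ : ‖steinerRow₁‖ = 1 :=
  norm_toLp_eq_one_of_sq_add_sq_eq_one (by norm_num [div_pow])

lemma norm_steinerRow₂ : ‖steinerRow₂‖ = 1 :=
  norm_toLp_eq_one_of_sq_add_sq_eq_one (by norm_num [div_pow])

lemma norm_steinerRow₁_add_steinerRow₂ : ‖steinerRow₁ + steinerRow₂‖ = 1 := by
  rw [steinerRow₁_add_steinerRow₂]
  exact norm_toLp_eq_one_of_sq_add_sq_eq_one (by norm_num)

/-- The calibrating form of the mailing problem with Steiner cost, encoded by its `g`-components: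
`steinerCovector g` is the vector that represents the covector `τ ↦ L(τ, g)`. -/
noncomputable def steinerCovector : ℝ × ℝ →ₗ[ℝ] EuclideanSpace ℝ (Fin 2) :=
  rowCombination steinerRow₁ steinerRow₂

lemma inner_steinerCovector (τ g : ℝ × ℝ) :
    inner ℝ !₂[τ.1, τ.2] (steinerCovector g) =
      (τ.1 / 2 + (Real.sqrt 3 / 2) * τ.2) * g.1 + (τ.1 / 2 - (Real.sqrt 3 / 2) * τ.2) * g.2 := by
  simp only [steinerCovector, rowCombination_apply, steinerRow₁, steinerRow₂, PiLp.inner_apply,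
    PiLp.add_apply, PiLp.smul_apply, smul_eq_mul, RCLike.inner_apply, Real.ringHom_apply,
    Fin.sum_univ_two, Matrix.cons_val_zero, Matrix.cons_val_one, Matrix.cons_val_fin_one]
  ring

lemma norm_steinerCovector_le_one {g : ℝ × ℝ} (hg : g ∈ convexHull ℝ hexagonVertices) :
    ‖steinerCovector g‖ ≤ 1 :=
  norm_rowCombination_le_of_mem_hexagon norm_steinerRow₁.le norm_steinerRow₂.le
    norm_steinerRow₁_add_steinerRow₂.le hg

lemma abs_inner_steinerCovector_le_norm (τ : EuclideanSpace ℝ (Fin 2)) {g : ℝ × ℝ}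
    (hg : g ∈ convexHull ℝ hexagonVertices) : |inner ℝ τ (steinerCovector g)| ≤ ‖τ‖ :=
  calc |inner ℝ τ (steinerCovector g)|
      ≤ ‖τ‖ * ‖steinerCovector g‖ := abs_real_inner_le_norm τ (steinerCovector g)
    _ ≤ ‖τ‖ := mul_le_of_le_one_right (norm_nonneg τ) (norm_steinerCovector_le_one hg)

lemma inner_steinerRow₁_steinerCovector : inner ℝ steinerRow₁ (steinerCovector (1, 0)) = 1 := by
  simp [steinerCovector, rowCombination_apply, norm_steinerRow₁]

lemma inner_steinerRow₂_steinerCovector : inner ℝ steinerRow₂ (steinerCovector (0, 1)) = 1 := by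
  simp [steinerCovector, rowCombination_apply, norm_steinerRow₂]

lemma inner_steinerRow₁_add_steinerRow₂_steinerCovector :
    inner ℝ (steinerRow₁ + steinerRow₂) (steinerCovector (1, 1)) = 1 := by
  simp only [steinerCovector, rowCombination_apply, one_smul, real_inner_self_eq_norm_sq,
    norm_steinerRow₁_add_steinerRow₂, one_pow]

end SteinerCovector

/-- Calibration of the mailing problem with Steiner cost: let
`∥·∥` be the norm on `ℝ²` whose unit ball is the hexagon
`conv {(1,0), (0,1), (1,1), (-1,0), (0,-1), (-1,-1)}`, and let
`L(τ, g) := (τ₁/2 + (√3/2) τ₂) g₁ + (τ₁/2 − (√3/2) τ₂) g₂`. Then (a) `|L(τ, g)| ≤ 1`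
whenever `τ` has Euclidean norm `1` and `∥g∥ ≤ 1`; and (b)
`L((1/2, √3/2), (1,0)) = L((1/2, −√3/2), (0,1)) = L((1,0), (1,1)) = 1`. -/
theorem steiner_calibration_hexagon
    (nrm : ℝ × ℝ → ℝ) (hnrm : IsNorm nrm)
    (hball : {x | nrm x ≤ 1} = convexHull ℝ
      ({((1 : ℝ), (0 : ℝ)), ((0 : ℝ), (1 : ℝ)), ((1 : ℝ), (1 : ℝ)),
        ((-1 : ℝ), (0 : ℝ)), ((0 : ℝ), (-1 : ℝ)), ((-1 : ℝ), (-1 : ℝ))} :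
        Set (ℝ × ℝ)))
    (L : ℝ × ℝ → ℝ × ℝ → ℝ)
    (hL : L = fun τ g =>
      (τ.1 / 2 + (Real.sqrt 3 / 2) * τ.2) * g.1 +
      (τ.1 / 2 - (Real.sqrt 3 / 2) * τ.2) * g.2) :
    (∀ τ g : ℝ × ℝ, τ.1 ^ 2 + τ.2 ^ 2 = 1 → nrm g ≤ 1 → |L τ g| ≤ 1) ∧
    L (1 / 2, Real.sqrt 3 / 2) (1, 0) = 1 ∧
    L (1 / 2, -(Real.sqrt 3 / 2)) (0, 1) = 1 ∧
    L (1, 0) (1, 1) = 1 := by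
  have hL_inner (τ g : ℝ × ℝ) : L τ g = inner ℝ !₂[τ.1, τ.2] (steinerCovector g) := by
    rw [hL, inner_steinerCovector]
  simp only [hL_inner]
  refine ⟨fun τ g hτ hg => ?_, inner_steinerRow₁_steinerCovector,
    inner_steinerRow₂_steinerCovector, ?_⟩
  · have hg_hexagon : g ∈ convexHull ℝ hexagonVertices := hball.subset hg
    have hτ_norm : ‖!₂[τ.1, τ.2]‖ = 1 := norm_toLp_eq_one_of_sq_add_sq_eq_one hτ
    exact (abs_inner_steinerCovector_le_norm _ hg_hexagon).trans_eq hτ_norm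
  · rw [← steinerRow₁_add_steinerRow₂]
    exact inner_steinerRow₁_add_steinerRow₂_steinerCovector
end
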